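/- Let n, m ≥ 1, let V : ℝ^n × ℝ^m → ℝ be continuous (no sign condition), λ, ε ∈ ℝ, u ∈ C_c^∞(ℝ^n × ℝ^m; ℂ), and f := -Δu - (λ+iε)u + Vu. Then for every δ ∈ (0,1), 2·( √(λ⁺) + √|ε| )·∫ |f·u̅| dx dy ≤ δ·( λ⁺·‖u‖_X² + ‖∇_x u‖_X² + ‖u‖_{X₁}² ) + 5·δ^{-1}·‖f‖_{X*}², where λ⁺ = max(λ, 0) and the integral is over all of ℝ^{n+m}. -/

import Mathlib

/-!
Write `F, G, U, L` for `‖f‖_{X*}`, `‖∇ₓu‖_X`, `‖u‖_{X₁}`, `‖u‖_X`. Cauchy–Schwarz on dyadic shells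
gives the duality bound `∫ |f ū| ≤ F L` (`lintegral_le_normXstar_normX`), which handles the
`√λ⁺` term directly. For the `√|ε|` term one needs `√|ε| L`. Since `V` has no sign, the usual global
energy bound on `∇u` is not available; instead the imaginary part of the equation is localized: tested
against `χ ū`, with `χ` a cutoff of `|x| ≤ R` supported in `|x| ≤ 2R` (`energy_identity`), it gives
`|ε| ∫_{|x| ≤ R} |u|² ≤ ∫_{|x| ≤ 2R} |f u| + (3 / 2R) ∫_{|x| ≤ 2R} |∇ₓu| |u|` (`local_mass_le`), in
which `λ` and `V` do not appear. The two integrals on the right are at most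
`2R F U` and `4R² G U`, whence `|ε| L² ≤ 2 F U + 6 G U` (`eps_mul_normX_sq_le`).
The constant `5` then comes from Young's inequality (`final_ineq`).
-/



open MeasureTheory ENNReal Real

noncomputable section

/-- Points of the waveguide ambient space `ℝ^n × ℝ^m`. -/
abbrev Pt (n m : ℕ) := EuclideanSpace ℝ (Fin n) × EuclideanSpace ℝ (Fin m)

variable {n m : ℕ}

/-- `L²` norm over a subset of `ℝ^{n+m}`. -/
def L2 {F : Type*} [NormedAddCommGroup F] (f : Pt n m → F) (S : Set (Pt n m)) : ℝ≥0∞ :=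
  eLpNorm f 2 (volume.restrict S)

/-- Morrey–Campanato norm `‖f‖_X = sup_{R>0} R^{-1/2} ‖f‖_{L²(|x|≤R)}`. -/
def normX {F : Type*} [NormedAddCommGroup F] (f : Pt n m → F) : ℝ≥0∞ :=
  ⨆ (R : ℝ) (_ : 0 < R), ENNReal.ofReal (R ^ (-(1:ℝ)/2)) * L2 f {p : Pt n m | ‖p.1‖ ≤ R}

/-- Morrey–Campanato norm `‖f‖_{X₁} = sup_{R>0} R^{-3/2} ‖f‖_{L²(|x|≤R)}`. -/
def normX1 {F : Type*} [NormedAddCommGroup F] (f : Pt n m → F) : ℝ≥0∞ :=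
  ⨆ (R : ℝ) (_ : 0 < R), ENNReal.ofReal (R ^ (-(3:ℝ)/2)) * L2 f {p : Pt n m | ‖p.1‖ ≤ R}

/-- Dual Morrey–Campanato norm
`‖f‖_{X*} = Σ_{j∈ℤ} 2^{j/2} ‖f‖_{L²(2^{j-1}≤|x|≤2^j)}`. -/
def normXstar {F : Type*} [NormedAddCommGroup F] (f : Pt n m → F) : ℝ≥0∞ :=
  ∑' j : ℤ, ENNReal.ofReal ((2:ℝ) ^ ((j:ℝ)/2)) *
    L2 f {p : Pt n m | (2:ℝ)^(j-1) ≤ ‖p.1‖ ∧ ‖p.1‖ ≤ (2:ℝ)^j}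

/-- Standard basis vector in the `x` variables. -/
def ex (n m : ℕ) (i : Fin n) : Pt n m := (EuclideanSpace.single i 1, 0)

/-- Standard basis vector in the `y` variables. -/
def ey (n m : ℕ) (i : Fin m) : Pt n m := (0, EuclideanSpace.single i 1)

/-- Laplacian in all `n+m` variables. -/
def lap (u : Pt n m → ℂ) (p : Pt n m) : ℂ :=
  (∑ i : Fin n, fderiv ℝ (fun q => fderiv ℝ u q (ex n m i)) p (ex n m i)) +
  ∑ i : Fin m, fderiv ℝ (fun q => fderiv ℝ u q (ey n m i)) p (ey n m i)

/-- Pointwise euclidean norm of the gradient in the `x` variables only. -/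
def gradXnorm (u : Pt n m → ℂ) (p : Pt n m) : ℝ :=
  Real.sqrt (∑ i : Fin n, ‖fderiv ℝ u p (ex n m i)‖^2)

/-- Pointwise squared euclidean norm of the full gradient. -/
def gradNormSq (u : Pt n m → ℂ) (p : Pt n m) : ℝ :=
  (∑ i : Fin n, ‖fderiv ℝ u p (ex n m i)‖^2) +
  ∑ i : Fin m, ‖fderiv ℝ u p (ey n m i)‖^2

/-- The right hand side `f := -Δu - (λ+iε)u + Vu` of the resolvent equation. -/
def resf (V : Pt n m → ℝ) (lam eps : ℝ) (u : Pt n m → ℂ) : Pt n m → ℂ :=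
  fun p => -lap u p - (lam + eps * Complex.I) * u p + (V p : ℂ) * u p

/-- A repulsive potential: nonnegative, continuous, `C¹` in `x` for `x ≠ 0`, and
`x·∇ₓ(|x| V) ≤ 0` for `x ≠ 0`. -/
structure IsRepulsive (V : Pt n m → ℝ) : Prop where
  nonneg : ∀ p, 0 ≤ V p
  continuous : Continuous V
  cdiff : ∀ y : EuclideanSpace ℝ (Fin m), ContDiffOn ℝ 1 (fun x => V (x, y)) {x | x ≠ 0}
  repulsive : ∀ (x : EuclideanSpace ℝ (Fin n)) (y : EuclideanSpace ℝ (Fin m)), x ≠ 0 →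
    fderiv ℝ (fun x' : EuclideanSpace ℝ (Fin n) => ‖x'‖ * V (x', y)) x x ≤ 0

/-! ### The cutoff and the final optimization -/

/-- A `C¹` radial cutoff equal to `1` on the ball of radius `R` and to `0` outside the ball of radius
`2R`, with gradient at most `3 / (2R)`. -/
lemma exists_cutoff (E : Type*) [NormedAddCommGroup E] [InnerProductSpace ℝ E]
    (R : ℝ) (hR : 0 < R) :
    ∃ φ : E → ℝ, ContDiff ℝ 1 φ ∧ (∀ x, 0 ≤ φ x) ∧ (∀ x, φ x ≤ 1) ∧ (∀ x, ‖x‖ ≤ R → φ x = 1) ∧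
      (∀ x, 2 * R ≤ ‖x‖ → φ x = 0) ∧ ∀ x, ‖fderiv ℝ φ x‖ ≤ 3 / (2 * R) := by
  -- the radial profile is `∫ s in r..2, k s`; the parabola `k` has integral `1` and maximum `3/2`
  set k : ℝ → ℝ := fun s => max 0 (6 * (s - 1) * (2 - s)) with hk
  have hkc : Continuous k := by fun_prop
  have hk0 : ∀ s, 0 ≤ k s := fun s => le_max_left _ _
  have hk1 : ∀ s, k s ≤ 3 / 2 := fun s => max_le (by norm_num) (by nlinarith [sq_nonneg (2 * s - 3)])
  have hkl : ∀ s, s ≤ 1 → k s = 0 := fun s hs => max_eq_left (by nlinarith)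
  have hkr : ∀ s, 2 ≤ s → k s = 0 := fun s hs => max_eq_left (by nlinarith)
  have hii : ∀ a b, IntervalIntegrable k volume a b := fun a b => hkc.intervalIntegrable a b
  set H : ℝ → ℝ := fun r => ∫ s in r..2, k s with hH
  have hd : ∀ r, HasDerivAt H (-k r) r := fun r =>
    intervalIntegral.integral_hasDerivAt_left (hii _ _)
      hkc.stronglyMeasurable.stronglyMeasurableAtFilter hkc.continuousAt
  have hder : deriv H = fun r => -k r := funext fun r => (hd r).deriv
  have hHc : ContDiff ℝ 1 H :=
    contDiff_one_iff_deriv.2 ⟨fun r => (hd r).differentiableAt, by rw [hder]; fun_prop⟩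
  have hanti : Antitone H := antitone_of_deriv_nonpos (fun r => (hd r).differentiableAt)
    (fun r => by rw [hder]; simpa using hk0 r)
  have h1 : H 1 = 1 := by
    have : H 1 = ∫ s in (1:ℝ)..2, (-6 * s ^ 2 + 18 * s - 12) := by
      apply intervalIntegral.integral_congr
      intro s hs
      rw [Set.uIcc_of_le (by norm_num)] at hs
      have : k s = 6 * (s - 1) * (2 - s) := max_eq_right (by nlinarith [hs.1, hs.2])
      simp only [this]; ring
    rw [this, intervalIntegral.integral_sub (by apply Continuous.intervalIntegrable; fun_prop)
      (by simp), intervalIntegral.integral_add (by apply Continuous.intervalIntegrable; fun_prop)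
      (by apply Continuous.intervalIntegrable; fun_prop)]
    rw [intervalIntegral.integral_const_mul, intervalIntegral.integral_const_mul]
    simp
    norm_num
  have hl : ∀ r, r ≤ 1 → H r = 1 := by
    intro r hr
    have h2 : ∫ s in r..1, k s = 0 := by
      rw [intervalIntegral.integral_congr (g := fun _ => (0:ℝ))]
      · simp
      · intro s hs
        rw [Set.uIcc_of_le hr] at hs
        exact hkl s hs.2
    rw [← h1]
    simp only [hH]
    rw [← intervalIntegral.integral_add_adjacent_intervals (hii r 1) (hii 1 2), h2, zero_add]
  have hr0 : ∀ r, 2 ≤ r → H r = 0 := by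
    intro r hr
    simp only [hH]
    rw [intervalIntegral.integral_congr (g := fun _ => (0:ℝ))]
    · simp
    · intro s hs
      rw [Set.uIcc_of_ge hr] at hs
      exact hkr s hs.1
  have hle : ∀ r, H r ≤ 1 := fun r => (le_total r 1).elim (fun h => (hl r h).le)
    fun h => (hanti h).trans h1.le
  have hge : ∀ r, 0 ≤ H r := fun r => (le_total 2 r).elim (fun h => (hr0 r h).ge)
    fun h => (hr0 2 le_rfl).ge.trans (hanti h)
  have hLip : LipschitzWith (3 / 2) H := by
    apply lipschitzWith_of_nnnorm_deriv_le (fun r => (hd r).differentiableAt)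
    intro r
    rw [hder, ← NNReal.coe_le_coe]
    simpa [abs_of_nonneg (hk0 r)] using hk1 r
  refine ⟨fun x => H (‖x‖ / R), ?_, fun x => hge _, fun x => hle _, fun x hx => hl _ ?_,
    fun x hx => hr0 _ ?_, fun x => ?_⟩
  · rw [contDiff_iff_contDiffAt]
    intro x
    by_cases hx : x = 0
    · subst hx
      have : (fun x : E => H (‖x‖ / R)) =ᶠ[nhds 0] fun _ => 1 := by
        filter_upwards [Metric.ball_mem_nhds (0:E) hR] with z hz
        apply hl
        rw [div_le_one hR]
        exact (mem_ball_zero_iff.1 hz).le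
      exact contDiffAt_const.congr_of_eventuallyEq this
    · exact hHc.contDiffAt.comp x ((contDiffAt_norm ℝ hx).div_const R)
  · rwa [div_le_one hR]
  · rwa [le_div_iff₀ hR]
  · have : LipschitzWith (Real.toNNReal (3 / (2 * R))) (fun x : E => H (‖x‖ / R)) := by
      apply LipschitzWith.of_dist_le_mul
      intro x y
      rw [Real.coe_toNNReal _ (by positivity)]
      refine (hLip.dist_le_mul _ _).trans ?_
      have h3 : dist (‖x‖ / R) (‖y‖ / R) ≤ dist x y / R := by
        rw [Real.dist_eq, ← sub_div, abs_div, abs_of_pos hR, dist_eq_norm]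
        gcongr
        exact abs_norm_sub_norm_le x y
      calc _ ≤ ((3 / 2 : NNReal) : ℝ) * (dist x y / R) := by gcongr
        _ = _ := by push_cast; field_simp
    have := norm_fderiv_le_of_lipschitz ℝ this (x₀ := x)
    rwa [Real.coe_toNNReal _ (by positivity)] at this

/-- The concluding optimization, where `F, G, U, L` stand for `‖f‖_{X*}`, `‖∇ₓu‖_X`, `‖u‖_{X₁}`,
`‖u‖_X`. -/
lemma final_ineq (lam e δ I F G U L : ℝ) (hl : 0 ≤ lam) (he : 0 ≤ e) (h0 : 0 < δ) (h1 : δ < 1)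
    (hF : 0 ≤ F) (hU : 0 ≤ U) 
    (hI : I ≤ F * L) (hq : e * L ^ 2 ≤ 2 * F * U + 6 * G * U) :
    2 * (√lam + √e) * I ≤ δ * (lam * L ^ 2 + G ^ 2 + U ^ 2) + 5 / δ * F ^ 2 := by
  -- with `F = δ φ` both sides carry a factor `δ`
  obtain ⟨φ, rfl⟩ : ∃ φ, F = δ * φ := ⟨F / δ, by field_simp⟩
  have hφ : 0 ≤ φ := by by_contra h; nlinarith
  have e1 : 5 / δ * (δ * φ) ^ 2 = δ * (5 * φ ^ 2) := by field_simp
  rw [e1]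
  obtain ⟨a, ha⟩ : ∃ a, a = √lam * L := ⟨_, rfl⟩
  obtain ⟨q, hqq⟩ : ∃ q, q = √e * L := ⟨_, rfl⟩
  have ha2 : lam * L ^ 2 = a ^ 2 := by rw [ha, mul_pow, Real.sq_sqrt hl]
  have hq2 : e * L ^ 2 = q ^ 2 := by rw [hqq, mul_pow, Real.sq_sqrt he]
  have h2 : 2 * (√lam + √e) * I ≤ δ * (2 * (a + q) * φ) := by
    calc _ ≤ 2 * (√lam + √e) * (δ * φ * L) := by gcongr
      _ = _ := by rw [ha, hqq]; ring
  refine h2.trans ?_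
  rw [ha2, ← mul_add]
  refine mul_le_mul_of_nonneg_left ?_ h0.le
  rw [hq2] at hq
  have h3 : q ^ 2 ≤ 2 * φ * U + 6 * G * U := by
    nlinarith [mul_nonneg (mul_nonneg hφ hU) (sub_nonneg.2 h1.le)]
  -- `2aφ ≤ a² + φ²` and `2qφ ≤ (2/7) q² + (7/2) φ²`; the remaining `φ²/2` absorbs the term `(4/7) φU`
  nlinarith [sq_nonneg (a - φ), sq_nonneg (q - 7/2 * φ), sq_nonneg (G - 6/7 * U), sq_nonneg (φ - 4/7 * U)]

/-! ### Duality between the Morrey–Campanato norms -/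

lemma lintegral_mul_le_L2 {F G : Type*} [NormedAddCommGroup F] [NormedAddCommGroup G]
    {f : Pt n m → F} {g : Pt n m → G} (hf : Continuous f) (hg : Continuous g) (S : Set (Pt n m)) :
    ∫⁻ p in S, ‖f p‖ₑ * ‖g p‖ₑ ≤ L2 f S * L2 g S := by
  have h := ENNReal.lintegral_mul_le_Lp_mul_Lq (volume.restrict S) (p := 2) (q := 2)
    Real.HolderConjugate.two_two (f := fun p => ‖f p‖ₑ) (g := fun p => ‖g p‖ₑ)
    hf.enorm.aemeasurable hg.enorm.aemeasurable
  simpa [L2, eLpNorm_eq_lintegral_rpow_enorm_toReal] using h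

lemma L2_mono {F : Type*} [NormedAddCommGroup F] (f : Pt n m → F) {S T : Set (Pt n m)}
    (h : S ⊆ T) : L2 f S ≤ L2 f T :=
  eLpNorm_mono_measure f (Measure.restrict_mono h le_rfl)

/-- Moves a power of the radius to the other side of an inequality. -/
lemma L2_le_of_weighted {a c : ℝ} {ρ : ℝ} (hρ : 0 < ρ) (hac : a + c = 0) {A B : ℝ≥0∞}
    (h : ENNReal.ofReal (ρ ^ a) * A ≤ B) : A ≤ ENNReal.ofReal (ρ ^ c) * B := by
  calc A = ENNReal.ofReal (ρ ^ c) * (ENNReal.ofReal (ρ ^ a) * A) := by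
        rw [← mul_assoc, ← ENNReal.ofReal_mul (by positivity), ← Real.rpow_add hρ, add_comm c a,
          hac]
        simp
    _ ≤ _ := by gcongr

lemma L2_le_normX {F : Type*} [NormedAddCommGroup F] (f : Pt n m → F) {ρ : ℝ} (hρ : 0 < ρ) :
    L2 f {p : Pt n m | ‖p.1‖ ≤ ρ} ≤ ENNReal.ofReal (ρ ^ (1 / 2 : ℝ)) * normX f :=
  L2_le_of_weighted (a := -(1:ℝ)/2) hρ (by norm_num)
    (le_iSup₂ (f := fun (R : ℝ) (_ : 0 < R) =>
      ENNReal.ofReal (R ^ (-(1:ℝ)/2)) * L2 f {p : Pt n m | ‖p.1‖ ≤ R}) ρ hρ)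

lemma L2_le_normX1 {F : Type*} [NormedAddCommGroup F] (f : Pt n m → F) {ρ : ℝ} (hρ : 0 < ρ) :
    L2 f {p : Pt n m | ‖p.1‖ ≤ ρ} ≤ ENNReal.ofReal (ρ ^ (3 / 2 : ℝ)) * normX1 f :=
  L2_le_of_weighted (a := -(3:ℝ)/2) hρ (by norm_num)
    (le_iSup₂ (f := fun (R : ℝ) (_ : 0 < R) =>
      ENNReal.ofReal (R ^ (-(3:ℝ)/2)) * L2 f {p : Pt n m | ‖p.1‖ ≤ R}) ρ hρ)

lemma volume_fst_eq_zero (hn : 1 ≤ n) : volume {p : Pt n m | p.1 = 0} = 0 := by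
  have : Nonempty (Fin n) := ⟨⟨0, hn⟩⟩
  have h : {p : Pt n m | p.1 = 0} = ({0} : Set (EuclideanSpace ℝ (Fin n))) ×ˢ Set.univ := by
    ext p; simp
  rw [h, Measure.volume_eq_prod, Measure.prod_prod]
  simp

/-- Dyadic duality principle: Cauchy–Schwarz on each dyadic shell. The shells cover everything but
the null set `x = 0`. -/
lemma lintegral_mul_le_normXstar (hn : 1 ≤ n) {F G : Type*} [NormedAddCommGroup F]
    [NormedAddCommGroup G] {f : Pt n m → F} {g : Pt n m → G} (hf : Continuous f)
    (hg : Continuous g) (S : Set (Pt n m)) (B : ℝ≥0∞)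
    (hB : ∀ j : ℤ, L2 g ({p : Pt n m | ‖p.1‖ ≤ (2:ℝ) ^ j} ∩ S) ≤
      ENNReal.ofReal ((2:ℝ) ^ ((j:ℝ) / 2)) * B) :
    ∫⁻ p in S, ‖f p‖ₑ * ‖g p‖ₑ ≤ normXstar f * B := by
  set A : ℤ → Set (Pt n m) := fun j => {p | (2:ℝ)^(j-1) ≤ ‖p.1‖ ∧ ‖p.1‖ ≤ (2:ℝ)^j} with hA
  have hcov : S ≤ᵐ[volume] ⋃ j, A j ∩ S := by
    have h0 : ∀ᵐ p : Pt n m, p.1 ≠ 0 := by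
      rw [ae_iff]; simpa using volume_fst_eq_zero hn
    filter_upwards [h0] with p hp hpS
    obtain ⟨j, hj1, hj2⟩ := exists_mem_Ioc_zpow (norm_pos_iff.2 hp) one_lt_two
    refine Set.mem_iUnion.2 ⟨j + 1, ⟨?_, hj2⟩, hpS⟩
    simpa using hj1.le
  calc ∫⁻ p in S, ‖f p‖ₑ * ‖g p‖ₑ
      ≤ ∫⁻ p in ⋃ j, A j ∩ S, ‖f p‖ₑ * ‖g p‖ₑ := lintegral_mono_set' hcov
    _ ≤ ∑' j, ∫⁻ p in A j ∩ S, ‖f p‖ₑ * ‖g p‖ₑ := lintegral_iUnion_le _ _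
    _ ≤ ∑' j : ℤ, ENNReal.ofReal ((2:ℝ) ^ ((j:ℝ)/2)) * L2 f (A j) * B := by
        refine ENNReal.tsum_le_tsum fun j => ?_
        calc _ ≤ L2 f (A j ∩ S) * L2 g (A j ∩ S) := lintegral_mul_le_L2 hf hg _
          _ ≤ L2 f (A j) * (ENNReal.ofReal ((2:ℝ) ^ ((j:ℝ) / 2)) * B) := by
              gcongr
              · exact L2_mono f Set.inter_subset_left
              · exact (L2_mono g (Set.inter_subset_inter_left S fun p hp => hp.2)).trans (hB j)
          _ = _ := by ring
    _ = _ := by rw [ENNReal.tsum_mul_right]; rfl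

lemma two_rpow_half (j : ℤ) : ((2:ℝ) ^ j) ^ (1 / 2 : ℝ) = (2:ℝ) ^ ((j:ℝ) / 2) := by
  rw [← Real.rpow_intCast, ← Real.rpow_mul (by norm_num)]; ring_nf

lemma lintegral_le_normXstar_normX (hn : 1 ≤ n) {f u : Pt n m → ℂ} (hf : Continuous f)
    (hu : Continuous u) : ∫⁻ p, ‖f p‖ₑ * ‖u p‖ₑ ≤ normXstar f * normX u := by
  rw [← setLIntegral_univ]
  refine lintegral_mul_le_normXstar hn hf hu _ _ fun j => ?_
  rw [Set.inter_univ, ← two_rpow_half]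
  exact L2_le_normX u (by positivity)

/-- On the `j`-th shell the relevant radius is `ρ = min (2^j) S`, and
`ρ^{3/2} ≤ 2^{j/2} S` gives the gain of a full power of `S`. -/
lemma setLIntegral_le_normXstar_normX1 (hn : 1 ≤ n) {f u : Pt n m → ℂ} (hf : Continuous f)
    (hu : Continuous u) {S : ℝ} (hS : 0 < S) :
    ∫⁻ p in {p : Pt n m | ‖p.1‖ ≤ S}, ‖f p‖ₑ * ‖u p‖ₑ ≤
      normXstar f * (ENNReal.ofReal S * normX1 u) := by
  refine lintegral_mul_le_normXstar hn hf hu _ _ fun j => ?_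
  have hpos : 0 < min ((2:ℝ) ^ j) S := lt_min (by positivity) hS
  calc _ ≤ L2 u {p : Pt n m | ‖p.1‖ ≤ min ((2:ℝ) ^ j) S} :=
        L2_mono u fun p hp => le_min (show ‖p.1‖ ≤ _ from hp.1) (show ‖p.1‖ ≤ _ from hp.2)
    _ ≤ _ := L2_le_normX1 u hpos
    _ ≤ ENNReal.ofReal ((2:ℝ) ^ ((j:ℝ) / 2) * S) * normX1 u := by
        gcongr
        rw [show (3 / 2 : ℝ) = 1 / 2 + 1 by norm_num, Real.rpow_add hpos, Real.rpow_one,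
          ← two_rpow_half]
        gcongr
        · exact min_le_left _ _
        · exact min_le_right _ _
    _ = _ := by rw [ENNReal.ofReal_mul (by positivity), mul_assoc]

/-! ### The localized mass identity -/

/-- The line derivative of the flux `Im (∂_v u · ū)` has no first-order term, since `∂_v u` times its
conjugate is real. -/
lemma fderiv_im_mul_conj {u : Pt n m → ℂ} (hu : ContDiff ℝ (⊤ : ℕ∞) u) (v p : Pt n m) :
    fderiv ℝ (fun q => (fderiv ℝ u q v * (starRingEnd ℂ) (u q)).im) p v =
      (fderiv ℝ (fun q => fderiv ℝ u q v) p v * (starRingEnd ℂ) (u p)).im := by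
  have h1 : HasFDerivAt u (fderiv ℝ u p) p := (hu.differentiable (by simp) p).hasFDerivAt
  have hu' : ContDiff ℝ 1 (fun q => fderiv ℝ u q v) :=
    (hu.fderiv_right (m := 1) (by norm_cast)).clm_apply contDiff_const
  have h2 : HasFDerivAt (fun q => fderiv ℝ u q v) (fderiv ℝ (fun q => fderiv ℝ u q v) p) p :=
    (hu'.differentiable (by simp) p).hasFDerivAt
  have h3 : HasFDerivAt (fun q => (starRingEnd ℂ) (u q))
      ((Complex.conjCLE : ℂ →L[ℝ] ℂ).comp (fderiv ℝ u p)) p :=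
    (Complex.conjCLE : ℂ →L[ℝ] ℂ).hasFDerivAt.comp p h1
  have h4 := (Complex.imCLM.hasFDerivAt.comp p (h2.mul h3)).fderiv
  refine (DFunLike.congr_fun h4 v).trans ?_
  simp
  ring

lemma integral_mul_deriv_flux {u : Pt n m → ℂ} (hu : ContDiff ℝ (⊤ : ℕ∞) u)
    (hsupp : HasCompactSupport u) {χ : Pt n m → ℝ} (hχ : ContDiff ℝ 1 χ) (v : Pt n m) :
    Integrable (fun p => χ p * (fderiv ℝ (fun q => fderiv ℝ u q v) p v *
      (starRingEnd ℂ) (u p)).im) ∧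
    Integrable (fun p => fderiv ℝ χ p v * (fderiv ℝ u p v * (starRingEnd ℂ) (u p)).im) ∧
    ∫ p, χ p * (fderiv ℝ (fun q => fderiv ℝ u q v) p v * (starRingEnd ℂ) (u p)).im =
      - ∫ p, fderiv ℝ χ p v * (fderiv ℝ u p v * (starRingEnd ℂ) (u p)).im := by
  set g : Pt n m → ℝ := fun q => (fderiv ℝ u q v * (starRingEnd ℂ) (u q)).im with hg
  have hu' : ContDiff ℝ 1 (fun q => fderiv ℝ u q v) :=
    (hu.fderiv_right (m := 1) (by norm_cast)).clm_apply contDiff_const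
  have hgc : ContDiff ℝ 1 g :=
    Complex.imCLM.contDiff.comp
      (hu'.mul ((Complex.conjCLE : ℂ →L[ℝ] ℂ).contDiff.comp (hu.of_le (by norm_cast))))
  have hgs : HasCompactSupport g := by
    refine hsupp.mono fun p hp => ?_
    contrapose! hp
    simp only [Function.mem_support, not_not] at hp
    simp [hg, hp]
  have hgd : Continuous fun p => fderiv ℝ g p v :=
    (hgc.continuous_fderiv (by simp)).clm_apply continuous_const
  have hχd : Continuous fun p => fderiv ℝ χ p v :=
    (hχ.continuous_fderiv (by simp)).clm_apply continuous_const
  have i1 : Integrable (fun p => χ p * fderiv ℝ g p v) :=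
    (hχ.continuous.mul hgd).integrable_of_hasCompactSupport
      ((hgs.fderiv_apply (𝕜 := ℝ) v).mul_left)
  have i2 : Integrable (fun p => fderiv ℝ χ p v * g p) :=
    (hχd.mul hgc.continuous).integrable_of_hasCompactSupport hgs.mul_left
  have i3 : Integrable (fun p => χ p * g p) :=
    (hχ.continuous.mul hgc.continuous).integrable_of_hasCompactSupport hgs.mul_left
  have : Measure.IsAddHaarMeasure (volume : Measure (Pt n m)) := by
    rw [Measure.volume_eq_prod]; infer_instance
  have key := integral_mul_fderiv_eq_neg_fderiv_mul_of_integrable (𝕜 := ℝ) i2 i1 i3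
    (fun x _ => hχ.differentiable (by simp) x) (fun x _ => hgc.differentiable (by simp) x)
  simp only [hg, fderiv_im_mul_conj hu] at i1 key
  exact ⟨i1, i2, key⟩

lemma continuous_resf {V : Pt n m → ℝ} (hV : Continuous V) (lam eps : ℝ) {u : Pt n m → ℂ}
    (hu : ContDiff ℝ (⊤ : ℕ∞) u) : Continuous (resf V lam eps u) := by
  have h : ∀ v : Pt n m, Continuous fun p => fderiv ℝ (fun q => fderiv ℝ u q v) p v := fun v => by
    have hu' : ContDiff ℝ 1 (fun q => fderiv ℝ u q v) :=
      (hu.fderiv_right (m := 1) (by norm_cast)).clm_apply contDiff_const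
    exact (hu'.continuous_fderiv (by simp)).clm_apply continuous_const
  have := hu.continuous
  have hl : Continuous (lap u) := by
    unfold lap
    exact (continuous_finsetSum _ fun i _ => h _).add (continuous_finsetSum _ fun i _ => h _)
  unfold resf
  fun_prop

/-- Imaginary part of `f ū`: the terms with `λ` and the real potential `V` disappear. -/
lemma eps_mul_normSq (V : Pt n m → ℝ) (lam eps : ℝ) (u : Pt n m → ℂ) (p : Pt n m) :
    eps * ‖u p‖ ^ 2 = -(resf V lam eps u p * (starRingEnd ℂ) (u p)).im
      - ((∑ i, (fderiv ℝ (fun q => fderiv ℝ u q (ex n m i)) p (ex n m i) *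
            (starRingEnd ℂ) (u p)).im) +
        ∑ i, (fderiv ℝ (fun q => fderiv ℝ u q (ey n m i)) p (ey n m i) *
            (starRingEnd ℂ) (u p)).im) := by
  rw [← Complex.im_sum, ← Complex.im_sum, ← Finset.sum_mul, ← Finset.sum_mul, ← Complex.add_im,
    ← add_mul]
  change _ = _ - (lap u p * _).im
  rw [← Complex.normSq_eq_norm_sq, Complex.normSq_apply]
  simp [resf]
  ring

/-- The imaginary part of the equation tested against `φ ū`, where `φ` depends on `x` only, so that
only `x`-derivatives of `u` survive the integration by parts. -/
lemma energy_identity {V : Pt n m → ℝ} (hV : Continuous V) (lam eps : ℝ) {u : Pt n m → ℂ}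
    (hu : ContDiff ℝ (⊤ : ℕ∞) u) (hsupp : HasCompactSupport u)
    {φ : EuclideanSpace ℝ (Fin n) → ℝ} (hφ : ContDiff ℝ 1 φ) :
    ∫ p : Pt n m, eps * (φ p.1 * ‖u p‖ ^ 2) =
      ∫ p : Pt n m, (-(φ p.1 * (resf V lam eps u p * (starRingEnd ℂ) (u p)).im) +
        ∑ i, fderiv ℝ φ p.1 (EuclideanSpace.single i 1) *
          (fderiv ℝ u p (ex n m i) * (starRingEnd ℂ) (u p)).im) := by
  set χ : Pt n m → ℝ := fun p => φ p.1 with hχdef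
  have hχ : ContDiff ℝ 1 χ := hφ.comp contDiff_fst
  have hfd : ∀ p v, fderiv ℝ χ p v = fderiv ℝ φ p.1 v.1 := fun p v => by
    have := ((hφ.differentiable (by simp) p.1).hasFDerivAt.comp p hasFDerivAt_fst).fderiv
    change fderiv ℝ (φ ∘ Prod.fst) p v = _
    rw [this]; rfl
  have hx := fun i => integral_mul_deriv_flux hu hsupp hχ (ex n m i)
  have hy := fun i => integral_mul_deriv_flux hu hsupp hχ (ey n m i)
  have hf : Integrable fun p => χ p * (resf V lam eps u p * (starRingEnd ℂ) (u p)).im := by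
    apply Continuous.integrable_of_hasCompactSupport
    · exact hχ.continuous.mul (Complex.continuous_im.comp ((continuous_resf hV lam eps hu).mul
        (Complex.continuous_conj.comp hu.continuous)))
    · refine hsupp.mono fun p hp => ?_
      contrapose! hp
      simp only [Function.mem_support, not_not] at hp
      simp [hp]
  have e1 : ∀ p, eps * (χ p * ‖u p‖ ^ 2) =
      -(χ p * (resf V lam eps u p * (starRingEnd ℂ) (u p)).im)
      - ((∑ i, χ p * (fderiv ℝ (fun q => fderiv ℝ u q (ex n m i)) p (ex n m i) *
            (starRingEnd ℂ) (u p)).im) +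
        ∑ i, χ p * (fderiv ℝ (fun q => fderiv ℝ u q (ey n m i)) p (ey n m i) *
            (starRingEnd ℂ) (u p)).im) := fun p => by
    rw [mul_left_comm, eps_mul_normSq V lam eps u p, ← Finset.mul_sum, ← Finset.mul_sum]; ring
  have i1 := integrable_finsetSum Finset.univ fun i _ => (hx i).1
  have i2 := integrable_finsetSum Finset.univ fun i _ => (hy i).1
  have i3 := integrable_finsetSum Finset.univ fun i _ => (hx i).2.1
  refine (integral_congr_ae (.of_forall e1)).trans ?_
  refine (integral_sub hf.neg (i1.add i2)).trans ?_
  rw [integral_add' i1 i2,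
    integral_finsetSum _ fun i _ => (hx i).1, integral_finsetSum _ fun i _ => (hy i).1,
    Finset.sum_congr rfl fun i _ => (hx i).2.2, Finset.sum_congr rfl fun i _ => (hy i).2.2]
  have hy0 : ∀ i p, fderiv ℝ χ p (ey n m i) = 0 := fun i p => by rw [hfd]; simp [ey]
  have hx0 : ∀ i p, fderiv ℝ χ p (ex n m i) = fderiv ℝ φ p.1 (EuclideanSpace.single i 1) :=
    fun i p => by rw [hfd]; simp [ex]
  simp_rw [hx0] at i3 ⊢
  simp_rw [hy0]
  refine Eq.trans ?_ (integral_add hf.neg i3).symm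
  rw [integral_finsetSum _ fun i _ => by simpa only [hx0] using (hx i).2.1]
  simp

/-! ### The absorption estimate -/

/-- Cauchy–Schwarz for the boundary flux of the localized mass identity; `A` plays the role of the
derivative of the cutoff. -/
lemma flux_term_le {u : Pt n m → ℂ} (p : Pt n m)
    (A : EuclideanSpace ℝ (Fin n) →L[ℝ] ℝ) {c : ℝ} (hA : ‖A‖ ≤ c) :
    |∑ i, A (EuclideanSpace.single i 1) * (fderiv ℝ u p (ex n m i) * (starRingEnd ℂ) (u p)).im| ≤
      c * (gradXnorm u p * ‖u p‖) := by
  set w : EuclideanSpace ℝ (Fin n) :=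
    WithLp.toLp 2 fun i => (fderiv ℝ u p (ex n m i) * (starRingEnd ℂ) (u p)).im with hw
  have hAw : ∑ i, A (EuclideanSpace.single i 1) *
      (fderiv ℝ u p (ex n m i) * (starRingEnd ℂ) (u p)).im = A w := by
    conv_rhs => rw [← (EuclideanSpace.basisFun (Fin n) ℝ).sum_repr w]
    simp [hw, mul_comm]
  have hwn : ‖w‖ ≤ gradXnorm u p * ‖u p‖ := by
    rw [EuclideanSpace.norm_eq, gradXnorm, ← Real.sqrt_sq (norm_nonneg (u p)),
      ← Real.sqrt_mul (by positivity), Finset.sum_mul]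
    refine Real.sqrt_le_sqrt (Finset.sum_le_sum fun i _ => ?_)
    rw [← mul_pow]
    gcongr
    refine (Complex.abs_im_le_norm _).trans ?_
    simp
  rw [hAw, ← Real.norm_eq_abs]
  exact (A.le_opNorm w).trans (mul_le_mul hA hwn (norm_nonneg _) ((norm_nonneg _).trans hA))

lemma enorm_integral_const_mul {α : Type*} [MeasurableSpace α] {μ : Measure α} (c : ℝ) {g : α → ℝ}
    (hg : Integrable g μ) (h0 : ∀ a, 0 ≤ g a) :
    ‖∫ a, c * g a ∂μ‖ₑ = ENNReal.ofReal |c| * ∫⁻ a, ENNReal.ofReal (g a) ∂μ := by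
  rw [integral_const_mul, enorm_mul, Real.enorm_eq_ofReal_abs,
    ← ofReal_integral_eq_lintegral_ofReal hg (.of_forall h0),
    Real.enorm_of_nonneg (integral_nonneg h0)]

/-- Localized absorption estimate: the imaginary part of the equation, tested against a cutoff of
the `x`-ball of radius `R` times `u`, controls `|ε|` times the mass in that ball. The real potential
and `λ` drop out, so no sign of `V` is needed. -/
lemma local_mass_le {V : Pt n m → ℝ} (hV : Continuous V) (lam eps : ℝ) {u : Pt n m → ℂ}
    (hu : ContDiff ℝ (⊤ : ℕ∞) u) (hsupp : HasCompactSupport u) {R : ℝ} (hR : 0 < R) :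
    ENNReal.ofReal |eps| * ∫⁻ p in {p : Pt n m | ‖p.1‖ ≤ R}, ‖u p‖ₑ ^ 2 ≤
      (∫⁻ p in {p : Pt n m | ‖p.1‖ ≤ 2 * R}, ‖resf V lam eps u p‖ₑ * ‖u p‖ₑ) +
      ENNReal.ofReal (3 / (2 * R)) *
        ∫⁻ p in {p : Pt n m | ‖p.1‖ ≤ 2 * R}, ‖gradXnorm u p‖ₑ * ‖u p‖ₑ := by
  obtain ⟨φ, hφ, h0, h1, hin, hout, hgrad⟩ :=
    exists_cutoff (EuclideanSpace ℝ (Fin n)) R hR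
  have hball : ∀ r, MeasurableSet {p : Pt n m | ‖p.1‖ ≤ r} := fun r =>
    measurableSet_le (by fun_prop) (by fun_prop)
  have hc : Measurable fun p => ‖resf V lam eps u p‖ₑ * ‖u p‖ₑ :=
    (continuous_resf hV lam eps hu).enorm.measurable.mul hu.continuous.enorm.measurable
  have hint : Integrable fun p : Pt n m => φ p.1 * ‖u p‖ ^ 2 := by
    apply Continuous.integrable_of_hasCompactSupport
    · have := hφ.continuous
      have := hu.continuous
      fun_prop
    · refine hsupp.mono fun p hp => ?_
      contrapose! hp
      simp only [Function.mem_support, not_not] at hp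
      simp [hp]
  calc _ ≤ ENNReal.ofReal |eps| * ∫⁻ p : Pt n m, ENNReal.ofReal (φ p.1 * ‖u p‖ ^ 2) := by
        refine mul_le_mul_right ?_ _
        rw [← lintegral_indicator (hball R)]
        refine lintegral_mono fun p => Set.indicator_le'
          (g := fun p => ENNReal.ofReal (φ p.1 * ‖u p‖ ^ 2)) (fun p hp => ?_) (fun _ _ => zero_le) p
        rw [hin p.1 hp, one_mul, ENNReal.ofReal_pow (norm_nonneg _), ofReal_norm]
    _ = ‖∫ p : Pt n m, eps * (φ p.1 * ‖u p‖ ^ 2)‖ₑ :=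
        (enorm_integral_const_mul eps hint fun p => mul_nonneg (h0 _) (by positivity)).symm
    _ ≤ ∫⁻ p, _ := by
        rw [energy_identity hV lam eps hu hsupp hφ]
        exact enorm_integral_le_lintegral_enorm _
    _ ≤ ∫⁻ p in {p : Pt n m | ‖p.1‖ ≤ 2 * R}, (‖resf V lam eps u p‖ₑ * ‖u p‖ₑ +
          ENNReal.ofReal (3 / (2 * R)) * (‖gradXnorm u p‖ₑ * ‖u p‖ₑ)) := by
        rw [← lintegral_indicator (hball _)]
        refine lintegral_mono fun p => ?_
        by_cases hp : p ∈ {p : Pt n m | ‖p.1‖ ≤ 2 * R}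
        · rw [Set.indicator_of_mem hp]
          have hg0 : 0 ≤ gradXnorm u p := Real.sqrt_nonneg _
          rw [← ofReal_norm, ← ofReal_norm (u p), ← ofReal_norm (resf V lam eps u p),
            ← ofReal_norm (gradXnorm u p), ← ENNReal.ofReal_mul (by positivity),
            ← ENNReal.ofReal_mul (by positivity), ← ENNReal.ofReal_mul (by positivity),
            ← ENNReal.ofReal_add (by positivity) (by positivity), Real.norm_of_nonneg hg0]
          refine ENNReal.ofReal_le_ofReal ((norm_add_le _ _).trans (add_le_add ?_ ?_))
          · rw [norm_neg, norm_mul, Real.norm_of_nonneg (h0 _)]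
            calc _ ≤ 1 * ‖(resf V lam eps u p * (starRingEnd ℂ) (u p)).im‖ := by
                  gcongr; exact h1 _
              _ ≤ 1 * ‖resf V lam eps u p * (starRingEnd ℂ) (u p)‖ := by
                  gcongr; exact Complex.abs_im_le_norm _
              _ = _ := by simp
          · exact flux_term_le p _ (hgrad p.1)
        · have hp' : 2 * R ≤ ‖p.1‖ := (not_le.1 hp).le
          -- `φ` attains its minimum `0` at `p.1`, so its derivative vanishes there
          have hmin : fderiv ℝ φ p.1 = 0 := IsLocalMin.fderiv_eq_zero
            (.of_forall fun z => by rw [hout _ hp']; exact h0 z)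
          simp [hout _ hp', hmin]
    _ = _ := by
        rw [lintegral_add_left hc, lintegral_const_mul' _ _ ENNReal.ofReal_ne_top]

lemma continuous_gradXnorm {u : Pt n m → ℂ} (hu : ContDiff ℝ (⊤ : ℕ∞) u) :
    Continuous fun p => gradXnorm u p := by
  have h : Continuous fun p => fderiv ℝ u p := hu.continuous_fderiv (by simp)
  unfold gradXnorm
  fun_prop

/-- Absorption estimate in Morrey–Campanato norms, `|ε| ‖u‖_X² ≤ (2 ‖f‖_{X*} + 6 ‖∇ₓu‖_X) ‖u‖_{X₁}`:
the localized estimate divided by `R`, with supremum over `R`. -/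
lemma eps_mul_normX_sq_le (hn : 1 ≤ n) {V : Pt n m → ℝ} (hV : Continuous V) (lam eps : ℝ)
    {u : Pt n m → ℂ} (hu : ContDiff ℝ (⊤ : ℕ∞) u) (hsupp : HasCompactSupport u) :
    ENNReal.ofReal |eps| * normX u ^ 2 ≤
      2 * normXstar (resf V lam eps u) * normX1 u +
      6 * normX (fun p => gradXnorm u p) * normX1 u := by
  have hpt : ∀ R : ℝ, 0 < R → ENNReal.ofReal |eps| *
      (ENNReal.ofReal (R ^ (-(1:ℝ)/2)) * L2 u {p : Pt n m | ‖p.1‖ ≤ R}) ^ 2 ≤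
      2 * normXstar (resf V lam eps u) * normX1 u +
      6 * normX (fun p => gradXnorm u p) * normX1 u := by
    intro R hR
    have hL : L2 u {p : Pt n m | ‖p.1‖ ≤ R} ^ 2 =
        ∫⁻ p in {p : Pt n m | ‖p.1‖ ≤ R}, ‖u p‖ₑ ^ 2 := by
      have := eLpNorm_nnreal_pow_eq_lintegral (f := u) (p := 2)
        (μ := volume.restrict {p : Pt n m | ‖p.1‖ ≤ R}) two_ne_zero
      simpa [L2] using this
    have hw : ENNReal.ofReal (R ^ (-(1:ℝ)/2)) ^ 2 = ENNReal.ofReal R⁻¹ := by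
      rw [← ENNReal.ofReal_pow (by positivity), ← Real.rpow_mul_natCast hR.le]
      norm_num [Real.rpow_neg_one]
    have hG : ∫⁻ p in {p : Pt n m | ‖p.1‖ ≤ 2 * R}, ‖gradXnorm u p‖ₑ * ‖u p‖ₑ ≤
        ENNReal.ofReal (4 * R ^ 2) * (normX (fun p => gradXnorm u p) * normX1 u) := by
      refine (lintegral_mul_le_L2 (continuous_gradXnorm hu) hu.continuous _).trans ?_
      refine (mul_le_mul' (L2_le_normX _ (by positivity))
        (L2_le_normX1 _ (by positivity))).trans_eq ?_
      rw [mul_mul_mul_comm, ← ENNReal.ofReal_mul (by positivity),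
        ← Real.rpow_add (by positivity)]
      congr 2
      norm_num
      ring
    calc _ = ENNReal.ofReal R⁻¹ * (ENNReal.ofReal |eps| *
          ∫⁻ p in {p : Pt n m | ‖p.1‖ ≤ R}, ‖u p‖ₑ ^ 2) := by
          rw [mul_pow, hL, hw]; ring
      _ ≤ ENNReal.ofReal R⁻¹ * (normXstar (resf V lam eps u) *
            (ENNReal.ofReal (2 * R) * normX1 u) + ENNReal.ofReal (3 / (2 * R)) *
            (ENNReal.ofReal (4 * R ^ 2) * (normX (fun p => gradXnorm u p) * normX1 u))) := by
          gcongr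
          refine (local_mass_le hV lam eps hu hsupp hR).trans ?_
          gcongr
          exact setLIntegral_le_normXstar_normX1 hn (continuous_resf hV lam eps hu)
            hu.continuous (by positivity)
      _ = ENNReal.ofReal (R⁻¹ * (2 * R)) * normXstar (resf V lam eps u) * normX1 u +
          ENNReal.ofReal (R⁻¹ * (3 / (2 * R)) * (4 * R ^ 2)) *
            normX (fun p => gradXnorm u p) * normX1 u := by
          rw [ENNReal.ofReal_mul (p := R⁻¹) (by positivity),
            ENNReal.ofReal_mul (p := R⁻¹ * (3 / (2 * R))) (by positivity),
            ENNReal.ofReal_mul (p := R⁻¹) (by positivity)]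
          ring
      _ = _ := by
          rw [show R⁻¹ * (2 * R) = 2 by field_simp,
            show R⁻¹ * (3 / (2 * R)) * (4 * R ^ 2) = 6 by field_simp; norm_num]
          simp
  -- squaring and multiplication by a constant are monotone, continuous and commute with suprema
  rw [normX, ENNReal.iSup₂_pow_of_ne_zero _ two_ne_zero]
  simp only [ENNReal.mul_iSup]
  exact iSup₂_le hpt

/-! ### The estimate -/

/-- the estimate (2.26) of the paper. -/
theorem basic3_estimate (n m : ℕ) (hn : 1 ≤ n) (hm : 1 ≤ m)
    (V : Pt n m → ℝ) (hV : Continuous V)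
    (lam eps : ℝ) (u : Pt n m → ℂ)
    (hu : ContDiff ℝ (⊤ : ℕ∞) u) (hsupp : HasCompactSupport u)
    (δ : ℝ) (hδ : δ ∈ Set.Ioo (0:ℝ) 1) :
    ENNReal.ofReal (2 * (Real.sqrt (max lam 0) + Real.sqrt |eps|)) *
        (∫⁻ p : Pt n m, (‖resf V lam eps u p * (starRingEnd ℂ) (u p)‖₊ : ℝ≥0∞)) ≤
      ENNReal.ofReal δ * (ENNReal.ofReal (max lam 0) * normX u ^ 2
        + normX (fun p => gradXnorm u p) ^ 2 + normX1 u ^ 2)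
      + ENNReal.ofReal (5 / δ) * normXstar (resf V lam eps u) ^ 2 := by
  have hfc := continuous_resf hV lam eps hu
  have hI : (∫⁻ p : Pt n m, (‖resf V lam eps u p * (starRingEnd ℂ) (u p)‖₊ : ℝ≥0∞)) ≤
      normXstar (resf V lam eps u) * normX u := by
    refine le_of_eq_of_le (lintegral_congr fun p => ?_)
      (lintegral_le_normXstar_normX hn hfc hu.continuous)
    rw [← enorm_eq_nnnorm, enorm_mul]
    congr 1
    rw [← ofReal_norm, Complex.norm_conj, ofReal_norm]
  have hE := eps_mul_normX_sq_le hn hV lam eps hu hsupp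
  refine (mul_le_mul_right hI _).trans ?_
  generalize normXstar (resf V lam eps u) = F at *
  generalize normX (fun p => gradXnorm u p) = G at *
  generalize normX1 u = U at *
  generalize normX u = L at *
  obtain ⟨h0, h1⟩ := hδ
  have hδ0 : ENNReal.ofReal δ ≠ 0 := by simpa using h0
  have h5 : ENNReal.ofReal (5 / δ) ≠ 0 := by simp; positivity
  by_cases hF : F = ⊤
  · simp [hF, ENNReal.mul_top h5]
  by_cases hG : G = ⊤
  · simp [hG, ENNReal.mul_top hδ0]
  by_cases hU : U = ⊤
  · simp [hU, ENNReal.mul_top hδ0]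
  by_cases hL : L = ⊤
  · -- the bound on `|eps| * L ^ 2` forces `eps = 0`, and the right side is finite only if `lam ≤ 0`
    have he : eps = 0 := by
      by_contra he
      have h6 : ENNReal.ofReal |eps| ≠ 0 := by simpa using he
      rw [hL, ENNReal.top_pow two_ne_zero, ENNReal.mul_top h6, top_le_iff] at hE
      exact absurd hE (by finiteness)
    by_cases hl : 0 < lam
    · have : ENNReal.ofReal (max lam 0) ≠ 0 := by simpa using hl
      rw [hL, ENNReal.top_pow two_ne_zero, ENNReal.mul_top this]
      simp [ENNReal.mul_top hδ0]
    · simp [he, max_eq_right (not_lt.1 hl)]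
  lift F to NNReal using hF
  lift G to NNReal using hG
  lift U to NNReal using hU
  lift L to NNReal using hL
  have key := final_ineq (max lam 0) |eps| δ (F * L) F G U L (le_max_right _ _) (abs_nonneg _)
    h0 h1 F.2 U.2 le_rfl ?_
  · have c1 : ∀ x : NNReal, (x : ℝ≥0∞) = ENNReal.ofReal x := fun x => by simp
    rw [c1 F, c1 G, c1 U, c1 L]
    simp only [← ENNReal.ofReal_pow NNReal.zero_le_coe]
    have h2 : 0 ≤ max lam 0 := le_max_right _ _
    rw [← ENNReal.ofReal_mul (by positivity), ← ENNReal.ofReal_mul (by positivity),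
      ← ENNReal.ofReal_mul (by positivity), ← ENNReal.ofReal_mul (by positivity),
      ← ENNReal.ofReal_add (by positivity) (by positivity),
      ← ENNReal.ofReal_add (by positivity) (by positivity),
      ← ENNReal.ofReal_mul (by positivity),
      ← ENNReal.ofReal_add (by positivity) (by positivity)]
    exact ENNReal.ofReal_le_ofReal key
  · have := ENNReal.toReal_mono (by finiteness) hE
    rw [ENNReal.toReal_add (by finiteness) (by finiteness)] at this
    simpa using this
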